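/- Let G be a group with an infinite cyclic central subgroup Z = ⟨z⟩ such that G/Z is isomorphic to SL_2(Z), and let K be the kernel of the composite G → SL_2(Z) → SL_2(Z/p) for a prime p ≥ 3. Then K is isomorphic to Z × F_M, where F_M is a free group of rank M = 1 + (p−1)p(p+1)/12. -/

import Mathlib

/-! The heart of the matter is Frasch's theorem that `Γ(p) = ker (SL₂(ℤ) → SL₂(ℤ/p))` is free of rank
`1 + (p - 1) p (p + 1) / 12` (`Congr.ker_red_mulEquiv`). Given it, the central extension
`⟨z⟩ → K → Γ(p)` splits because its quotient is free, and as `⟨z⟩` is central the splitting gives a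
direct product (`Congr.splits`).

Ping-pong on the upper half-plane, with the half-planes `re < 0` and `re > 0`, shows that the image
`PSL` of `SL₂(ℤ)` in the permutations of `ℍ` is the free product of `⟨s⟩ ≅ ℤ/2` and `⟨u⟩ ≅ ℤ/3`
(`Congr.exists_lift`). Since `-1 ∉ Γ(p)`, the group `Γ(p)` maps isomorphically onto a normal
subgroup `barGamma p` of `PSL`, of index `n = |SL₂(ℤ/p)| / 2`, and `s`, `u` act without fixed points
on the coset space `A = PSL ⧸ barGamma p`.

A cocycle `PSL → A → X` with values in a group `X` is determined by its values on `s` and `u`, and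
these are constrained by one relation on each `s`-orbit and each `u`-orbit in `A`. Hence the action
groupoid of `PSL` on `A` is freely generated by `n / 2 + 2 n / 3 = 7 n / 6` arrows
(`Congr.freelyGenerates`). The stabilizer of a point embeds, by the universal cocycle, in the free
group on these arrows, so it is free by the Nielsen–Schreier theorem. Its rank is found by counting
homomorphisms to `ℤ/2`: a cocycle amounts to a homomorphism on the stabilizer together with `n - 1`
arbitrary values, so the rank is `7 n / 6 - (n - 1) = 1 + n / 6`
(`Congr.FreelyGenerates.nonempty_mulEquiv`).
-/

namespace Congr

/-! ### Cocycles and stabilizers -/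


/-- A group-valued cocycle on the action groupoid of `W` acting on `A`: equivalently, a functor from
that groupoid to the one-object groupoid of `X`. -/
def IsCocycle {W A X : Type} [Group W] [MulAction W A] [Group X] (d : W → A → X) : Prop :=
  ∀ v w a, d (v * w) a = d v (w • a) * d w a

theorem IsCocycle.map_one {W A X : Type} [Group W] [MulAction W A] [Group X] {d : W → A → X}
    (hd : IsCocycle d) (a : A) : d 1 a = 1 := by
  have := hd 1 1 a
  simpa using this

theorem IsCocycle.comp {W A X Y : Type} [Group W] [MulAction W A] [Group X] [Group Y]
    {d : W → A → X} (hd : IsCocycle d) (f : X →* Y) : IsCocycle fun w a => f (d w a) := by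
  intro v w a
  simp [hd v w a]

/-- A family of arrows `pt e ⟶ gen e • pt e` freely generating the action groupoid of `W` on `A`:
every labelling of the family by elements of a group extends uniquely to a cocycle. -/
structure FreelyGenerates {W A E : Type} [Group W] [MulAction W A] (gen : E → W) (pt : E → A) :
    Prop where
  exists_lift : ∀ {X : Type} [Group X] (l : E → X),
    ∃ d : W → A → X, IsCocycle d ∧ ∀ e, d (gen e) (pt e) = l e
  ext : ∀ {X : Type} [Group X] (d d' : W → A → X), IsCocycle d → IsCocycle d' →
    (∀ e, d (gen e) (pt e) = d' (gen e) (pt e)) → d = d'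

section Stabilizer

variable {W A : Type} [Group W] [MulAction W A]

/-- A choice of arrows `τ a : r ⟶ a` turns every arrow of the action groupoid into a loop at `r`. -/
def toLoop (r : A) (τ : A → W) (hτ : ∀ a, τ a • r = a) (w : W) (a : A) :
    MulAction.stabilizer W r :=
  ⟨(τ (w • a))⁻¹ * w * τ a, by
    rw [MulAction.mem_stabilizer_iff, mul_smul, mul_smul, hτ, inv_smul_eq_iff, hτ]⟩

theorem isCocycle_toLoop (r : A) (τ : A → W) (hτ : ∀ a, τ a • r = a) :
    IsCocycle (toLoop r τ hτ) := by
  intro v w a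
  ext
  simp [toLoop, mul_smul, mul_assoc]

theorem toLoop_coe (r : A) (τ : A → W) (hτ : ∀ a, τ a • r = a) (h1 : τ r = 1)
    (h : MulAction.stabilizer W r) : toLoop r τ hτ h r = h := by
  have h2 : (h : W) • r = r := h.2
  ext
  simp [toLoop, h2, h1]

/-- The restriction of a cocycle to the loops at `r`. -/
def restrict {X : Type} [Group X] {d : W → A → X} (hd : IsCocycle d) (r : A) :
    MulAction.stabilizer W r →* X where
  toFun h := d h r
  map_one' := hd.map_one r
  map_mul' g h := by
    have h2 : (h : W) • r = r := h.2
    have := hd g h r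
    rw [h2] at this
    exact this

variable {E : Type} {gen : E → W} {pt : E → A}

/-- By the universal cocycle, the stabilizer is a retract of the free group on `E`, hence
free by Nielsen–Schreier. -/
theorem FreelyGenerates.isFreeGroup (hE : FreelyGenerates gen pt) (r : A) (τ : A → W)
    (hτ : ∀ a, τ a • r = a) (h1 : τ r = 1) : IsFreeGroup (MulAction.stabilizer W r) := by
  obtain ⟨c, hc, hcE⟩ := hE.exists_lift (X := FreeGroup E) FreeGroup.of
  let Θ : FreeGroup E →* MulAction.stabilizer W r :=
    FreeGroup.lift fun e => toLoop r τ hτ (gen e) (pt e)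
  have key : (fun w a => Θ (c w a)) = toLoop r τ hτ :=
    hE.ext _ _ (hc.comp Θ) (isCocycle_toLoop r τ hτ) fun e => by simp [Θ, hcE]
  have hinj : Function.Injective (restrict hc r) :=
    Function.LeftInverse.injective (g := Θ) fun h =>
      (congrFun (congrFun key h) r).trans (toLoop_coe r τ hτ h1 h)
  exact IsFreeGroup.ofMulEquiv (MonoidHom.ofInjective hinj).symm

/-- A cocycle amounts to a homomorphism on the loops at `r` together with arbitrary values on the
arrows `τ a`, `a ≠ r`. -/
theorem FreelyGenerates.card_hom (hE : FreelyGenerates gen pt) (r : A) (τ : A → W)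
    (hτ : ∀ a, τ a • r = a) (h1 : τ r = 1) (X : Type) [Group X] :
    Nat.card ((MulAction.stabilizer W r →* X) × ({a // a ≠ r} → X)) = Nat.card (E → X) := by
  classical
  let t' : ({a // a ≠ r} → X) → A → X := fun t a => if h : a = r then 1 else t ⟨a, h⟩
  have t'r : ∀ t, t' t r = 1 := fun t => by simp [t']
  have t'a : ∀ t (a : {a // a ≠ r}), t' t a = t a := fun t a => by simp [t', a.2]
  let D : (MulAction.stabilizer W r →* X) × ({a // a ≠ r} → X) → W → A → X :=
    fun gt w a => t' gt.2 (w • a) * gt.1 (toLoop r τ hτ w a) * (t' gt.2 a)⁻¹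
  have hD : ∀ gt, IsCocycle (D gt) := by
    intro gt v w a
    simp [D, isCocycle_toLoop r τ hτ v w a, mul_smul, mul_assoc]
  refine Nat.card_congr (Equiv.ofBijective (fun gt e => D gt (gen e) (pt e)) ⟨?_, ?_⟩)
  · intro x y hxy
    have hxy' : D x = D y := hE.ext _ _ (hD x) (hD y) fun e => congrFun hxy e
    refine Prod.ext (MonoidHom.ext fun h => ?_) (funext fun a => ?_)
    · have h2 : (h : W) • r = r := h.2
      simpa [D, h2, t'r, toLoop_coe r τ hτ h1] using congrFun (congrFun hxy' h) r
    · have hl : toLoop r τ hτ (τ a) r = 1 := by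
        ext
        simp [toLoop, h1, hτ]
      simpa [D, hl, t'r, hτ, t'a] using congrFun (congrFun hxy' (τ a)) r
  · intro l
    obtain ⟨d, hd, hdl⟩ := hE.exists_lift l
    refine ⟨(restrict hd r, fun a => d (τ a) r), funext fun e => ?_⟩
    have ht : ∀ a, t' (fun a => d (τ a) r) a = d (τ a) r := by
      intro a
      by_cases h : a = r
      · simp [t', h, h1, hd.map_one]
      · simp [t', h]
    rw [← hdl]
    simp only [D, ht]
    set w := gen e
    set a := pt e
    have e1 := hd (τ (w • a)) (toLoop r τ hτ w a) r
    have e2 := hd w (τ a) r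
    have h2 : (toLoop r τ hτ w a : W) • r = r := (toLoop r τ hτ w a).2
    have e3 : τ (w • a) * (toLoop r τ hτ w a : W) = w * τ a := by simp [toLoop, mul_assoc]
    rw [e3, h2, e2, hτ] at e1
    rw [mul_inv_eq_iff_eq_mul]
    exact e1.symm

/-- The rank is one minus the Euler characteristic of the generating graph, which has vertex set `A`
and edge set `E`. -/
theorem FreelyGenerates.nonempty_mulEquiv [Finite A] [Finite E] [MulAction.IsPretransitive W A]
    (hE : FreelyGenerates gen pt) (r : A) (M : ℕ) (hM : M + Nat.card A = Nat.card E + 1) :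
    Nonempty (MulAction.stabilizer W r ≃* FreeGroup (Fin M)) := by
  classical
  obtain ⟨τ, hτ, h1⟩ : ∃ τ : A → W, (∀ a, τ a • r = a) ∧ τ r = 1 := by
    choose τ hτ using fun a => MulAction.exists_smul_eq W r a
    refine ⟨fun a => if a = r then 1 else τ a, fun a => ?_, by simp⟩
    by_cases h : a = r <;> simp [h, hτ]
  have := hE.isFreeGroup r τ hτ h1
  let I := IsFreeGroup.Generators (MulAction.stabilizer W r)
  have hcard := hE.card_hom r τ hτ h1 (Multiplicative (ZMod 2))
  have h2 : Nat.card (Multiplicative (ZMod 2)) = 2 := by simp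
  rw [Nat.card_prod, ← Nat.card_congr (IsFreeGroup.lift (G := MulAction.stabilizer W r)
    (H := Multiplicative (ZMod 2)))] at hcard
  have hA : Nat.card {a // a ≠ r} + 1 = Nat.card A := by
    have := Fintype.ofFinite A
    have := Fintype.card_pos_iff.2 ⟨r⟩
    simp only [Nat.card_eq_fintype_card, ne_eq, Fintype.card_subtype_compl,
      Fintype.card_subtype_eq]
    omega
  have hI : Finite I := by
    by_contra hI
    rw [not_finite_iff_infinite] at hI
    have : Infinite (I → Multiplicative (ZMod 2)) := inferInstance
    rw [Nat.card_eq_zero_of_infinite, zero_mul] at hcard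
    have : 0 < Nat.card (E → Multiplicative (ZMod 2)) := Nat.card_pos
    omega
  have hIM : Nat.card I = M := by
    rw [Nat.card_fun, Nat.card_fun, Nat.card_fun, h2, ← pow_add] at hcard
    have := Nat.pow_right_injective le_rfl hcard
    simp only [I] at *
    omega
  exact ⟨(IsFreeGroup.toFreeGroup _).trans
    (FreeGroup.freeGroupCongr (Finite.equivFinOfCardEq hIM))⟩

end Stabilizer

section Generators

variable {W A : Type} [Group W] [MulAction W A]

/-- Representatives for the orbits of an element of prime order acting without fixed points. -/
theorem exists_orbit_representatives (m : ℕ) (hm : m.Prime) (w : W) (hw : w ^ m = 1)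
    (hfix : ∀ a : A, w • a ≠ a) : ∃ (B : Type) (f : B → A),
      Function.Bijective fun x : B × Fin m => w ^ (x.2 : ℕ) • f x.1 := by
  let B := Quotient (MulAction.orbitRel (Subgroup.zpowers w) A)
  refine ⟨B, Quotient.out, ?_, ?_⟩
  · rintro ⟨b, k⟩ ⟨b', k'⟩ h
    have horb : ∀ (c : B) (j : ℕ), (⟦w ^ j • c.out⟧ : B) = c := by
      intro c j
      conv_rhs => rw [← Quotient.out_eq c]
      exact Quotient.sound ⟨⟨w ^ j, Subgroup.npow_mem_zpowers w j⟩, rfl⟩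
    have hb : b = b' := by
      have := congrArg (fun a : A => (⟦a⟧ : B)) h
      simpa only [horb] using this
    subst hb
    dsimp only at h
    -- if `w ^ j` fixes a point and `m ∤ j`, then so does `w`, a power of `w ^ j`
    have key : ∀ j : ℤ, w ^ j • b.out = b.out → (m : ℤ) ∣ j := by
      intro j hj
      by_contra hdvd
      have hcop : IsCoprime (m : ℤ) j :=
        (Nat.prime_iff_prime_int.1 hm).irreducible.coprime_iff_not_dvd.2 hdvd
      obtain ⟨x, y, hxy⟩ := hcop
      apply hfix b.out
      have e : w = (w ^ j) ^ y := by
        rw [← zpow_mul]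
        nth_rewrite 1 [← zpow_one w]
        rw [← hxy, zpow_add, mul_comm x, zpow_mul w m, zpow_natCast, hw, one_zpow, one_mul, mul_comm]
      have : w ^ j ∈ MulAction.stabilizer W b.out := hj
      have := zpow_mem this y
      rw [← e] at this
      exact this
    have hdvd := key ((k : ℤ) - k') (by
      rw [sub_eq_neg_add, zpow_add, mul_smul, zpow_neg, zpow_natCast, zpow_natCast, h,
        inv_smul_smul])
    have hk : k = k' := by
      ext
      have := Int.eq_zero_of_abs_lt_dvd hdvd (by rw [abs_lt]; omega)
      omega
    rw [hk]
  · intro a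
    obtain ⟨⟨_, ⟨j, rfl⟩⟩, hj⟩ := Quotient.exact (Quotient.out_eq (⟦a⟧ : B)).symm
    have hm0 : (m : ℤ) ≠ 0 := by exact_mod_cast hm.ne_zero
    have hj0 := Int.emod_nonneg j hm0
    have hjm := Int.emod_lt_of_pos j (by have := hm.pos; omega : (0 : ℤ) < m)
    refine ⟨(⟦a⟧, ⟨(j % m).toNat, by omega⟩), ?_⟩
    dsimp only
    rw [← zpow_natCast, Int.toNat_of_nonneg hj0]
    have : w ^ (j % m) = w ^ j := by
      conv_rhs => rw [← Int.emod_add_mul_ediv j m, zpow_add, zpow_mul, zpow_natCast, hw, one_zpow,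
        mul_one]
    rw [this]
    exact hj

variable {s u : W}

/-- Multiplication in the wreath product of `X` by the permutation action of `W` on `A`. -/
theorem wreath_mul_left {X : Type} [Group X]
    (x y : (A → X) ⋊[mulAutArrow (G := W)] W) (b : A) :
    (x * y).left b = x.left b * y.left (x.right⁻¹ • b) := rfl

/-- Since `W` is the free product of `⟨s⟩ ≅ ℤ/2` and `⟨u⟩ ≅ ℤ/3`, a cocycle may be prescribed on `s`
and `u` subject only to the relations `s ^ 2 = 1` and `u ^ 3 = 1`. -/
theorem exists_cocycle (hgen : Subgroup.closure {s, u} = ⊤) (hs : s * s = 1) (hu : u * (u * u) = 1)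
    (hlift : ∀ {X : Type} [Group X] (x y : X), x * x = 1 → y * (y * y) = 1 →
      ∃ f : W →* X, f s = x ∧ f u = y)
    {X : Type} [Group X] (σ υ : A → X) (hσ : ∀ a, σ (s • a) * σ a = 1)
    (hυ : ∀ a, υ (u • u • a) * (υ (u • a) * υ a) = 1) :
    ∃ d : W → A → X, IsCocycle d ∧ d s = σ ∧ d u = υ := by
  -- cocycles with values in `X` are the sections of the wreath product over `W`
  obtain ⟨F, hFs, hFu⟩ := hlift (X := (A → X) ⋊[mulAutArrow] W) ⟨fun b => σ (s⁻¹ • b), s⟩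
    ⟨fun b => υ (u⁻¹ • b), u⟩
    (by
      ext b
      · obtain ⟨a, rfl⟩ : ∃ a, b = s • s • a := ⟨s⁻¹ • s⁻¹ • b, by simp⟩
        rw [wreath_mul_left]; simp [hσ, -SemidirectProduct.mk_eq_inl_mul_inr]
      · simpa using hs)
    (by
      ext b
      · obtain ⟨a, rfl⟩ : ∃ a, b = u • u • u • a := ⟨u⁻¹ • u⁻¹ • u⁻¹ • b, by simp⟩
        rw [wreath_mul_left, wreath_mul_left]; simpa [-SemidirectProduct.mk_eq_inl_mul_inr] using hυ a
      · simpa using hu)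
  have hF : SemidirectProduct.rightHom.comp F = MonoidHom.id W := by
    refine MonoidHom.eq_of_eqOn_dense hgen ?_
    rintro x (rfl | rfl)
    · simp [hFs]
    · simp [hFu]
  have hF' : ∀ w, (F w).right = w := fun w => DFunLike.congr_fun hF w
  refine ⟨fun w a => (F w).left (w • a), ?_, ?_, ?_⟩
  · intro v w a
    dsimp only
    rw [map_mul F v w, wreath_mul_left, hF', mul_smul, inv_smul_smul]
  · ext a
    simp [hFs]
  · ext a
    simp [hFu]

theorem cocycle_ext (hgen : Subgroup.closure {s, u} = ⊤) {X : Type} [Group X] {d d' : W → A → X}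
    (hd : IsCocycle d) (hd' : IsCocycle d') (h1 : d s = d' s) (h2 : d u = d' u) : d = d' := by
  funext w
  have hw : w ∈ Subgroup.closure {s, u} := hgen ▸ Subgroup.mem_top w
  induction hw using Subgroup.closure_induction with
  | mem x hx => rcases hx with rfl | rfl <;> assumption
  | one => funext a; rw [hd.map_one, hd'.map_one]
  | mul x y _ _ hx hy => funext a; rw [hd, hd', hx, hy]
  | inv x _ hx =>
    funext a
    have e1 := hd x x⁻¹ a
    have e2 := hd' x x⁻¹ a
    rw [mul_inv_cancel, hd.map_one] at e1
    rw [mul_inv_cancel, hd'.map_one, ← hx] at e2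
    exact mul_left_cancel (e1.symm.trans e2)

/-- When `s` and `u` act without fixed points, free generators of the action groupoid are obtained
by omitting one edge out of each `s`-orbit (of two edges) and each `u`-orbit (of three). -/
theorem freelyGenerates (hgen : Subgroup.closure {s, u} = ⊤) (hs : s * s = 1) (hu : u * (u * u) = 1)
    (hlift : ∀ {X : Type} [Group X] (x y : X), x * x = 1 → y * (y * y) = 1 →
      ∃ f : W →* X, f s = x ∧ f u = y)
    {B C : Type} (f : B → A) (g : C → A)
    (hf : Function.Bijective fun x : B × Fin 2 => s ^ (x.2 : ℕ) • f x.1)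
    (hg : Function.Bijective fun x : C × Fin 3 => u ^ (x.2 : ℕ) • g x.1) :
    FreelyGenerates (E := B ⊕ C ⊕ C) (Sum.elim (fun _ => s) fun _ => u)
      (Sum.elim f (Sum.elim g fun c => u • g c)) where
  exists_lift {X} _ l := by
    let ef := Equiv.ofBijective _ hf
    let eg := Equiv.ofBijective _ hg
    have hs' : ∀ a : A, s • s • a = a := fun a => by rw [smul_smul, hs, one_smul]
    have hu' : ∀ a : A, u • u • u • a = a := fun a => by
      rw [smul_smul, smul_smul, mul_assoc, hu, one_smul]
    let σ : A → X := fun a =>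
      ![l (.inl (ef.symm a).1), (l (.inl (ef.symm a).1))⁻¹] (ef.symm a).2
    let υ : A → X := fun a =>
      ![l (.inr (.inl (eg.symm a).1)), l (.inr (.inr (eg.symm a).1)),
        (l (.inr (.inr (eg.symm a).1)) * l (.inr (.inl (eg.symm a).1)))⁻¹] (eg.symm a).2
    have f0 : ∀ b, ef.symm (f b) = (b, 0) := fun b => by
      rw [Equiv.symm_apply_eq]; simp [ef]
    have f1 : ∀ b, ef.symm (s • f b) = (b, 1) := fun b => by
      rw [Equiv.symm_apply_eq]; simp [ef]
    have g0 : ∀ b, eg.symm (g b) = (b, 0) := fun b => by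
      rw [Equiv.symm_apply_eq]; simp [eg]
    have g1 : ∀ b, eg.symm (u • g b) = (b, 1) := fun b => by
      rw [Equiv.symm_apply_eq]; simp [eg]
    have g2 : ∀ b, eg.symm (u • u • g b) = (b, 2) := fun b => by
      rw [Equiv.symm_apply_eq]; simp [eg, pow_two, mul_smul]
    obtain ⟨d, hd, hds, hdu⟩ := exists_cocycle (A := A) hgen hs hu hlift σ υ
      (fun a => by
        obtain ⟨⟨b, k⟩, rfl⟩ := hf.2 a
        fin_cases k
        · simp [σ, f0, f1]
        · simp [σ, f0, f1, hs'])
      (fun a => by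
        obtain ⟨⟨b, k⟩, rfl⟩ := hg.2 a
        fin_cases k
        · simp [υ, g0, g1, g2]
        · simp [υ, g0, g1, g2, hu']
        · simp [υ, g0, g1, g2, hu', pow_two, mul_smul])
    refine ⟨d, hd, ?_⟩
    rintro (b | c | c)
    · simp [hds, σ, f0]
    · simp [hdu, υ, g0]
    · simp [hdu, υ, g1]
  ext {X} _ d d' hd hd' h := by
    have hf0 : ∀ b, d s (f b) = d' s (f b) := fun b => h (.inl b)
    have hg0 : ∀ b, d u (g b) = d' u (g b) := fun b => h (.inr (.inl b))
    have hg1 : ∀ b, d u (u • g b) = d' u (u • g b) := fun b => h (.inr (.inr b))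
    refine cocycle_ext hgen hd hd' (funext fun a => ?_) (funext fun a => ?_)
    · obtain ⟨⟨b, k⟩, rfl⟩ := hf.2 a
      fin_cases k
      · simpa using hf0 b
      · have e1 := hd s s (f b)
        have e2 := hd' s s (f b)
        rw [hs, hd.map_one] at e1
        rw [hs, hd'.map_one, ← hf0] at e2
        simpa using mul_right_cancel (e1.symm.trans e2)
    · obtain ⟨⟨b, k⟩, rfl⟩ := hg.2 a
      fin_cases k
      · simpa using hg0 b
      · simpa using hg1 b
      · have e1 := hd u (u * u) (g b)
        have e2 := hd' u (u * u) (g b)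
        rw [hu, hd.map_one, hd] at e1
        rw [hu, hd'.map_one, hd', ← hg0, ← hg1] at e2
        simpa [pow_two] using mul_right_cancel (e1.symm.trans e2)

/-- A point stabilizer, for a transitive action of `ℤ/2 * ℤ/3` on a finite set `A` on which neither
`s` nor `u` has a fixed point, is free of rank `1 + |A| / 6`. -/
theorem stabilizer_mulEquiv [Finite A] [MulAction.IsPretransitive W A]
    (hgen : Subgroup.closure {s, u} = ⊤) (hs : s * s = 1) (hu : u * (u * u) = 1)
    (hlift : ∀ {X : Type} [Group X] (x y : X), x * x = 1 → y * (y * y) = 1 →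
      ∃ f : W →* X, f s = x ∧ f u = y)
    (hsA : ∀ a : A, s • a ≠ a) (huA : ∀ a : A, u • a ≠ a) (r : A) (M : ℕ)
    (hM : 6 * M = 6 + Nat.card A) :
    Nonempty (MulAction.stabilizer W r ≃* FreeGroup (Fin M)) := by
  obtain ⟨B, f, hf⟩ := exists_orbit_representatives 2 Nat.prime_two s (by rw [pow_two, hs]) hsA
  obtain ⟨C, g, hg⟩ := exists_orbit_representatives 3 Nat.prime_three u
    (by rw [pow_succ', pow_two, hu]) huA
  have : Finite (B × Fin 2) := .of_injective _ hf.1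
  have : Finite (C × Fin 3) := .of_injective _ hg.1
  have : Finite B := .of_injective (fun b => (b, (0 : Fin 2))) fun _ _ h => congrArg Prod.fst h
  have : Finite C := .of_injective (fun b => (b, (0 : Fin 3))) fun _ _ h => congrArg Prod.fst h
  have hB := Nat.card_congr (Equiv.ofBijective _ hf)
  have hC := Nat.card_congr (Equiv.ofBijective _ hg)
  simp only [Nat.card_prod, Nat.card_fin] at hB hC
  refine (freelyGenerates hgen hs hu hlift f g hf hg).nonempty_mulEquiv r M ?_
  simp only [Nat.card_sum]
  omega

end Generators

section Modular

open MatrixGroups UpperHalfPlane ModularGroup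

/-! ### The modular group as a free product -/

theorem exists_hom_zmod {G : Type*} [Group G] (n : ℕ) (x : G) (hx : x ^ n = 1) :
    ∃ f : Multiplicative (ZMod n) →* G, f (Multiplicative.ofAdd 1) = x := by
  let g : ℤ →+ Additive G := zmultiplesHom (Additive G) (Additive.ofMul x)
  have hg : g n = 0 := by simp [g, ← ofMul_pow, hx]
  refine ⟨AddMonoidHom.toMultiplicativeLeft (ZMod.lift n ⟨g, hg⟩), ?_⟩
  have : ZMod.lift n ⟨g, hg⟩ ((1 : ℤ) : ZMod n) = g 1 := ZMod.lift_coe n ⟨g, hg⟩ 1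
  simp only [Int.cast_one] at this
  change Additive.toMul (ZMod.lift n ⟨g, hg⟩ 1) = x
  rw [this]
  simp [g]

/-- The action of `SL₂(ℤ)` on the upper half-plane, as a homomorphism to permutations. -/
noncomputable abbrev toPerm : SL(2, ℤ) →* Equiv.Perm ℍ := MulAction.toPermHom SL(2, ℤ) ℍ

theorem S_sq : (S * S : SL(2, ℤ)) = -1 := by decide
theorem U_cube : ((T * S) * ((T * S) * (T * S)) : SL(2, ℤ)) = -1 := by decide

theorem mem_ker_toPerm {g : SL(2, ℤ)} : g ∈ toPerm.ker ↔ g = 1 ∨ g = -1 := by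
  constructor
  · intro hg
    have h1 : ∀ z : ℍ, g • z = z := fun z => Equiv.congr_fun hg z
    have h2 : ∀ z : ℍ, (g 0 0 : ℂ) * z + g 0 1 = z * (g 1 0 * z + g 1 1) := by
      intro z
      have h3 := congrArg UpperHalfPlane.coe (h1 z)
      rw [coe_specialLinearGroup_apply] at h3
      have := denom_ne_zero (g : GL (Fin 2) ℝ) z
      rw [ModularGroup.denom_apply] at this
      rw [div_eq_iff (by simpa using this)] at h3
      simpa using h3
    have ha := h2 I
    have hb := h2 ⟨2 * Complex.I, by simp⟩
    simp [Complex.ext_iff] at ha hb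
    have hdet := g.det_coe
    rw [Matrix.det_fin_two] at hdet
    obtain ⟨h01, h00⟩ := ha
    obtain ⟨h01', h00'⟩ := hb
    have c0 : g 1 0 = 0 := by
      have : (g 1 0 : ℝ) = 0 := by linarith
      exact_mod_cast this
    have b0 : g 0 1 = 0 := by
      have : (g 0 1 : ℝ) = 0 := by linarith
      exact_mod_cast this
    have ad : g 0 0 = g 1 1 := by exact_mod_cast h00
    have : g 1 1 = 1 ∨ g 1 1 = -1 := by
      rw [c0, b0, ad] at hdet
      exact mul_self_eq_one_iff.1 (by linarith)
    rcases this with h | h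
    · left; ext i j; fin_cases i <;> fin_cases j <;> simp [*]
    · right; ext i j; fin_cases i <;> fin_cases j <;> simp [*]
  · rintro (rfl | rfl)
    · exact one_mem _
    · refine Equiv.ext fun z => ?_
      simp

theorem S_neg {z : ℍ} (hz : 0 < z.re) : (S • z).re < 0 := by
  rw [modular_S_smul]
  have := z.normSq_pos
  simp only [UpperHalfPlane.re, Complex.inv_re, Complex.neg_re, Complex.normSq_neg]
  exact div_neg_of_neg_of_pos (by simpa using hz) this

theorem U_pos {z : ℍ} (hz : z.re < 0) : 1 < ((T * S) • z).re := by
  rw [mul_smul, modular_T_smul, modular_S_smul]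
  have := z.normSq_pos
  rw [vadd_re, lt_add_iff_pos_right]
  simp only [UpperHalfPlane.re, Complex.inv_re, Complex.neg_re, Complex.normSq_neg]
  exact div_pos (by simpa using hz) this

theorem U_sq_pos {z : ℍ} (hz : z.re < 0) : 0 < ((T * S) • (T * S) • z).re := by
  have h1 : ((T * S * (T * S) : SL(2, ℤ))) = S * T⁻¹ := by decide
  rw [smul_smul, h1, mul_smul, modular_S_smul, show (T⁻¹ : SL(2, ℤ)) = T ^ (-1 : ℤ) by simp, modular_T_zpow_smul]
  set w := ((-1 : ℤ) : ℝ) +ᵥ z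
  have := w.normSq_pos
  simp only [UpperHalfPlane.re, Complex.inv_re, Complex.neg_re, Complex.normSq_neg]
  have h2 : w.re < 0 := by simp [w]; linarith
  exact div_pos (by simpa using h2) this


theorem closure_S_U : Subgroup.closure {S, T * S} = (⊤ : Subgroup SL(2, ℤ)) := by
  rw [eq_top_iff, ← SpecialLinearGroup.SL2Z_generators, Subgroup.closure_le]
  have hS : S ∈ Subgroup.closure ({S, T * S} : Set SL(2, ℤ)) :=
    Subgroup.subset_closure (by simp)
  have hU : T * S ∈ Subgroup.closure ({S, T * S} : Set SL(2, ℤ)) :=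
    Subgroup.subset_closure (by simp)
  rintro x (rfl | rfl)
  · exact hS
  · simpa using mul_mem hU (inv_mem hS)

/-- The modular group `PSL₂(ℤ)`, realized as a group of permutations of the upper half-plane. -/
noncomputable abbrev PSL : Type := toPerm.range

/-- The class of `S`, acting as `z ↦ -1 / z`; an involution. -/
noncomputable def s : PSL := toPerm.rangeRestrict S

/-- The class of `T * S`, acting as `z ↦ 1 - 1 / z`; an element of order three. -/
noncomputable def u : PSL := toPerm.rangeRestrict (T * S)

theorem rangeRestrict_neg_one : toPerm.rangeRestrict (-1) = 1 :=
  Subtype.ext (mem_ker_toPerm.2 (Or.inr rfl))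

theorem s_sq : s * s = 1 := by
  rw [s, ← map_mul, S_sq, rangeRestrict_neg_one]

theorem u_cube : u * (u * u) = 1 := by
  rw [u, ← map_mul, ← map_mul, U_cube, rangeRestrict_neg_one]

theorem closure_s_u : Subgroup.closure {s, u} = ⊤ := by
  have := congrArg (Subgroup.map toPerm.rangeRestrict) closure_S_U
  rwa [MonoidHom.map_closure, Set.image_pair, Subgroup.map_top_of_surjective _
    toPerm.rangeRestrict_surjective] at this

open scoped Pointwise in
/-- The modular group is the free product of `⟨s⟩ ≅ ℤ/2` and `⟨u⟩ ≅ ℤ/3`, by ping-pong with the sets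
`re < 0` and `0 < re`; this is the resulting universal property. -/
theorem exists_lift {X : Type} [Group X] (x y : X) (hx : x * x = 1) (hy : y * (y * y) = 1) :
    ∃ f : PSL →* X, f s = x ∧ f u = y := by
  let n : Fin 2 → ℕ := ![2, 3]
  let H : Fin 2 → Type := fun i => Multiplicative (ZMod (n i))
  have hom : ∀ {G : Type} [Group G] (a b : G), a * a = 1 → b * (b * b) = 1 →
      ∃ f : ∀ i, H i →* G, f 0 (Multiplicative.ofAdd (1 : ZMod 2)) = a ∧
        f 1 (Multiplicative.ofAdd (1 : ZMod 3)) = b := by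
    intro G _ a b ha hb
    obtain ⟨f0, h0⟩ := exists_hom_zmod 2 a (by rw [pow_two, ha])
    obtain ⟨f1, h1⟩ := exists_hom_zmod 3 b (by rw [pow_succ', pow_two, hb])
    exact ⟨Fin.cons f0 (Fin.cons f1 finZeroElim), h0, h1⟩
  obtain ⟨φ, hφs, hφu⟩ := hom s u s_sq u_cube
  obtain ⟨ψ, hψs, hψu⟩ := hom x y hx hy
  have hinj : Function.Injective (Monoid.CoprodI.lift φ) := by
    refine Monoid.CoprodI.lift_injective_of_ping_pong φ (Or.inr ⟨1, ?_⟩)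
      (α := ℍ) ![{z | z.re < 0}, {z | 0 < z.re}] ?_ ?_ ?_
    · have : Cardinal.mk (H 1) = 3 := by
        change Cardinal.mk (Fin 3) = 3
        simp
      exact this.ge
    · intro i
      fin_cases i
      · exact ⟨⟨-1 + Complex.I, by simp⟩, by change (-1 + Complex.I).re < 0; simp⟩
      · exact ⟨⟨1 + Complex.I, by simp⟩, by change 0 < (1 + Complex.I).re; simp⟩
    · intro i j hij
      fin_cases i <;> fin_cases j
      · exact absurd rfl hij
      · exact Set.disjoint_left.2 fun z (h1 : z.re < 0) (h2 : 0 < z.re) => lt_asymm h1 h2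
      · exact Set.disjoint_left.2 fun z (h1 : 0 < z.re) (h2 : z.re < 0) => lt_asymm h1 h2
      · exact absurd rfl hij
    · intro i j hij
      fin_cases i <;> fin_cases j
      · exact absurd rfl hij
      · intro (h : ZMod 2) hh
        have : ∀ k : ZMod 2, k ≠ 0 → k = 1 := by decide
        have : h = (1 : ZMod 2) := this h hh
        subst this
        rintro _ ⟨z, hz : 0 < z.re, rfl⟩
        change (φ 0 (Multiplicative.ofAdd (1 : ZMod 2)) • z).re < 0
        rw [hφs]
        exact S_neg hz
      · intro (h : ZMod 3) hh
        have : ∀ k : ZMod 3, k ≠ 0 → k = 1 ∨ k = 2 := by decide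
        have : h = (1 : ZMod 3) ∨ h = (2 : ZMod 3) := this h hh
        rintro _ ⟨z, hz : z.re < 0, rfl⟩
        rcases this with rfl | rfl
        · change 0 < (φ 1 (Multiplicative.ofAdd (1 : ZMod 3)) • z).re
          rw [hφu]
          exact zero_lt_one.trans (U_pos hz)
        · change 0 < (φ 1 (Multiplicative.ofAdd (1 : ZMod 3) * Multiplicative.ofAdd (1 : ZMod 3)) • z).re
          have e : φ 1 (Multiplicative.ofAdd (1 : ZMod 3) * Multiplicative.ofAdd (1 : ZMod 3)) = u * u := by
            rw [← hφu]; exact map_mul (φ 1) _ _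
          rw [e]
          exact U_sq_pos hz
      · exact absurd rfl hij
  have hs : Monoid.CoprodI.lift φ (Monoid.CoprodI.of (i := (0 : Fin 2)) (Multiplicative.ofAdd (1 : ZMod 2) : H 0)) = s := by
    rw [Monoid.CoprodI.lift_of, ← hφs]
  have hu : Monoid.CoprodI.lift φ (Monoid.CoprodI.of (i := (1 : Fin 2)) (Multiplicative.ofAdd (1 : ZMod 3) : H 1)) = u := by
    rw [Monoid.CoprodI.lift_of, ← hφu]
  have hsurj : Function.Surjective (Monoid.CoprodI.lift φ) := by
    rw [← MonoidHom.range_eq_top, eq_top_iff, ← closure_s_u, Subgroup.closure_le]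
    rintro _ (rfl | rfl)
    · exact ⟨_, hs⟩
    · exact ⟨_, hu⟩
  let e := MulEquiv.ofBijective _ ⟨hinj, hsurj⟩
  refine ⟨(Monoid.CoprodI.lift ψ).comp e.symm.toMonoidHom, ?_, ?_⟩
  · have : e.symm s = Monoid.CoprodI.of (i := (0 : Fin 2))
        (Multiplicative.ofAdd (1 : ZMod 2) : H 0) := by
      rw [← hs]
      exact e.symm_apply_apply (Monoid.CoprodI.of (i := (0 : Fin 2))
        (Multiplicative.ofAdd (1 : ZMod 2) : H 0))
    change Monoid.CoprodI.lift ψ (e.symm s) = x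
    rw [this, Monoid.CoprodI.lift_of, ← hψs]
  · have : e.symm u = Monoid.CoprodI.of (i := (1 : Fin 2))
        (Multiplicative.ofAdd (1 : ZMod 3) : H 1) := by
      rw [← hu]
      exact e.symm_apply_apply (Monoid.CoprodI.of (i := (1 : Fin 2))
        (Multiplicative.ofAdd (1 : ZMod 3) : H 1))
    change Monoid.CoprodI.lift ψ (e.symm u) = y
    rw [this, Monoid.CoprodI.lift_of, ← hψu]

/-! ### Reduction modulo `p` -/

variable (p : ℕ)

/-- Reduction modulo `p`. -/
abbrev red (p : ℕ) : SL(2, ℤ) →* SL(2, ZMod p) :=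
  Matrix.SpecialLinearGroup.map (Int.castRingHom (ZMod p))

theorem card_SL2 [Fact p.Prime] : Nat.card SL(2, ZMod p) = (p - 1) * p * (p + 1) := by
  have hp := (Fact.out : p.Prime)
  have hGL := Matrix.card_GL_field (𝔽 := ZMod p) 2
  have hdet := Matrix.GeneralLinearGroup.det_surjective (n := Fin 2) (R := ZMod p)
  have hker : (Matrix.GeneralLinearGroup.det (n := Fin 2) (R := ZMod p)).ker =
      (Matrix.SpecialLinearGroup.toGL (n := Fin 2) (R := ZMod p)).range := by
    ext g
    rw [MonoidHom.mem_ker, MonoidHom.mem_range]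
    constructor
    · intro h
      exact ⟨⟨g, congrArg Units.val h⟩, Units.ext rfl⟩
    · rintro ⟨x, rfl⟩
      exact Units.ext x.2
  -- `SL₂` is the kernel of `det`, so `|SL₂| * (p - 1) = |GL₂|`
  have h1 := Subgroup.card_mul_index (Matrix.GeneralLinearGroup.det (n := Fin 2) (R := ZMod p)).ker
  rw [Subgroup.index_ker, hker, MonoidHom.range_eq_top.2 hdet, Subgroup.card_top,
    ← Nat.card_congr (MonoidHom.ofInjective
      Matrix.SpecialLinearGroup.toGL_injective).toEquiv, hGL] at h1
  simp only [Nat.card_eq_fintype_card, ZMod.card_units_eq_totient, Nat.totient_prime hp,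
    ZMod.card, Fin.prod_univ_two] at h1
  obtain ⟨q, rfl⟩ : ∃ q, p = q + 1 := ⟨p - 1, by have := hp.pos; omega⟩
  have hq : 0 < q := by have := hp.two_le; omega
  rw [Nat.card_eq_fintype_card]
  refine Nat.eq_of_mul_eq_mul_right hq ?_
  simp only [Nat.add_sub_cancel] at h1 ⊢
  rw [h1]
  have e1 : (q + 1) ^ 2 - (q + 1) ^ ((0 : Fin 2) : ℕ) = q * (q + 2) := by
    simp; rw [show (q + 1) ^ 2 = q * (q + 2) + 1 by ring]; simp
  have e2 : (q + 1) ^ 2 - (q + 1) ^ ((1 : Fin 2) : ℕ) = q * (q + 1) := by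
    simp; rw [show (q + 1) ^ 2 = q * (q + 1) + (q + 1) by ring]; simp
  rw [e1, e2]
  ring

/-- `SL₂(ℤ/p)` is generated by elementary matrices, which lift to `SL₂(ℤ)`. -/
theorem red_surjective [Fact p.Prime] : Function.Surjective (red p) := by
  let up : ZMod p → SL(2, ZMod p) := fun x => ⟨!![1, x; 0, 1], by simp⟩
  let lo : ZMod p → SL(2, ZMod p) := fun x => ⟨!![1, 0; x, 1], by simp⟩
  have hup : ∀ x, up x ∈ (red p).range := by
    intro x
    obtain ⟨n, rfl⟩ := ZMod.intCast_surjective x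
    refine ⟨⟨!![1, n; 0, 1], by simp⟩, ?_⟩
    ext i j
    change ((!![1, n; 0, 1] i j : ℤ) : ZMod p) = !![1, (n : ZMod p); 0, 1] i j
    fin_cases i <;> fin_cases j <;> simp
  have hlo : ∀ x, lo x ∈ (red p).range := by
    intro x
    obtain ⟨n, rfl⟩ := ZMod.intCast_surjective x
    refine ⟨⟨!![1, 0; n, 1], by simp⟩, ?_⟩
    ext i j
    change ((!![1, 0; n, 1] i j : ℤ) : ZMod p) = !![1, 0; (n : ZMod p), 1] i j
    fin_cases i <;> fin_cases j <;> simp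
  have hne : ∀ g : SL(2, ZMod p), g 1 0 ≠ 0 → g ∈ (red p).range := by
    intro g hc
    have hdet := g.det_coe
    rw [Matrix.det_fin_two] at hdet
    have : g = up ((g 0 0 - 1) / g 1 0) * lo (g 1 0) * up ((g 1 1 - 1) / g 1 0) := by
      ext i j
      change g i j = (!![1, (g 0 0 - 1) / g 1 0; 0, 1] * !![1, 0; g 1 0, 1] *
        !![1, (g 1 1 - 1) / g 1 0; 0, 1] : Matrix (Fin 2) (Fin 2) (ZMod p)) i j
      fin_cases i <;> fin_cases j <;> simp [hc]
      · field_simp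
        linear_combination -hdet
      · field_simp
        ring
    rw [this]
    exact mul_mem (mul_mem (hup _) (hlo _)) (hup _)
  rw [← MonoidHom.range_eq_top, eq_top_iff]
  intro g _
  by_cases hc : g 1 0 = 0
  · have hdet := g.det_coe
    rw [Matrix.det_fin_two, hc, mul_zero, sub_zero] at hdet
    have h0 : g 0 0 ≠ 0 := left_ne_zero_of_mul_eq_one hdet
    -- a row operation makes the lower left entry nonzero
    have h1 : lo 1 * g ∈ (red p).range := hne _ (by
      change (!![1, 0; 1, 1] * g.1 : Matrix (Fin 2) (Fin 2) (ZMod p)) 1 0 ≠ 0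
      simpa [Matrix.mul_apply, Fin.sum_univ_two, hc] using h0)
    simpa using mul_mem (inv_mem (hlo 1)) h1
  · exact hne g hc

theorem red_apply (g : SL(2, ℤ)) (i j : Fin 2) : red p g i j = (g i j : ZMod p) := rfl

theorem neg_one_ne_one (hp3 : 3 ≤ p) : (-1 : ZMod p) ≠ 1 := by
  have : Fact (2 < p) := ⟨hp3⟩
  exact ZMod.neg_one_ne_one

/-- The image of the principal congruence subgroup of level `p` in `PSL₂(ℤ)`. -/
noncomputable abbrev barGamma (p : ℕ) : Subgroup PSL := (red p).ker.map toPerm.rangeRestrict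

theorem mem_ker_rangeRestrict {g : SL(2, ℤ)} :
    g ∈ toPerm.rangeRestrict.ker ↔ g = 1 ∨ g = -1 := by
  rw [MonoidHom.ker_rangeRestrict, mem_ker_toPerm]

/-- The only nontrivial element acting trivially on the upper half-plane is `-1`, and `-1` is not
congruent to `1` modulo `p`. -/
theorem disjoint_ker (hp3 : 3 ≤ p) :
    (red p).ker ⊓ toPerm.rangeRestrict.ker = ⊥ := by
  rw [eq_bot_iff]
  rintro g ⟨h1, h2⟩
  rcases mem_ker_rangeRestrict.1 h2 with rfl | rfl
  · exact one_mem _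
  · exfalso
    have h3 : red p (-1) 0 0 = (1 : SL(2, ZMod p)) 0 0 := by rw [MonoidHom.mem_ker.1 h1]
    rw [red_apply] at h3
    exact neg_one_ne_one p hp3 (by simpa using h3)

/-- A matrix with lower left entry `1`, such as `S` or `T * S`, is not congruent to `1` or `-1` modulo
`p`, so its class avoids `barGamma p`. -/
theorem not_mem_barGamma (hp : p.Prime) (g : SL(2, ℤ)) (hg : g 1 0 = 1) :
    toPerm.rangeRestrict g ∉ barGamma p := by
  have : Fact p.Prime := ⟨hp⟩
  rintro ⟨k, hk, hkg⟩
  have hk' : red p k = 1 := hk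
  have h1 : k * g⁻¹ ∈ toPerm.rangeRestrict.ker := by
    rw [MonoidHom.mem_ker, map_mul, map_inv, hkg, mul_inv_cancel]
  have h2 : g = k ∨ g = -k := by
    rcases mem_ker_rangeRestrict.1 h1 with h | h
    · exact Or.inl (mul_inv_eq_one.1 h).symm
    · right
      rw [mul_inv_eq_iff_eq_mul.1 h]
      simp
  have h3 : (k 1 0 : ZMod p) = 0 := by
    rw [← red_apply, hk']
    simp
  rcases h2 with rfl | rfl
  · rw [hg] at h3
    simp at h3
  · have h4 : k 1 0 = -1 := by
      have : -(k 1 0) = 1 := hg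
      omega
    rw [h4] at h3
    simp at h3

theorem card_ker_rangeRestrict : Nat.card toPerm.rangeRestrict.ker = 2 := by
  rw [Nat.card_eq_two_iff]
  refine ⟨1, ⟨-1, mem_ker_rangeRestrict.2 (Or.inr rfl)⟩, ?_, ?_⟩
  · intro h
    have := congrArg Subtype.val h
    revert this
    decide
  · rw [Set.eq_univ_iff_forall]
    rintro ⟨g, hg⟩
    rcases mem_ker_rangeRestrict.1 hg with rfl | rfl
    · exact Or.inl rfl
    · exact Or.inr rfl

theorem index_barGamma (hp : p.Prime) (hp3 : 3 ≤ p) :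
    2 * (barGamma p).index = (p - 1) * p * (p + 1) := by
  have : Fact p.Prime := ⟨hp⟩
  have h1 : (red p).ker.index = (p - 1) * p * (p + 1) := by
    rw [Subgroup.index_ker, MonoidHom.range_eq_top.2 (red_surjective p), Subgroup.card_top,
      card_SL2]
  have h2 : (red p).ker.relIndex toPerm.rangeRestrict.ker = 2 := by
    rw [← Subgroup.inf_relIndex_right, disjoint_ker p hp3, Subgroup.relIndex_bot_left,
      card_ker_rangeRestrict]
  rw [Subgroup.index_map, MonoidHom.range_eq_top.2 toPerm.rangeRestrict_surjective,
    Subgroup.index_top, mul_one, ← h1,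
    ← Subgroup.relIndex_mul_index (le_sup_left : (red p).ker ≤ _ ⊔ toPerm.rangeRestrict.ker),
    Subgroup.relIndex_sup_left, h2]

/-- Frasch: the principal congruence subgroup of prime level `p ≥ 3` is free of rank
`1 + (p - 1) p (p + 1) / 12`. -/
theorem ker_red_mulEquiv (hp : p.Prime) (hp3 : 3 ≤ p) (M : ℕ)
    (hM : 12 * M = 12 + (p - 1) * p * (p + 1)) :
    Nonempty ((red p).ker ≃* FreeGroup (Fin M)) := by
  have hindex := index_barGamma p hp hp3
  have hN : (barGamma p).Normal :=
    Subgroup.Normal.map inferInstance _ toPerm.rangeRestrict_surjective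
  -- by normality, an element with a fixed coset lies in `barGamma p`
  have hfree : ∀ w : PSL, w ∉ barGamma p → ∀ a : PSL ⧸ barGamma p, w • a ≠ a := by
    intro w hw a
    obtain ⟨v, rfl⟩ := QuotientGroup.mk_surjective a
    intro h
    refine hw ?_
    have h2 : ((w * v : PSL) : PSL ⧸ barGamma p) = v := h
    have h3 := hN.mem_comm (QuotientGroup.eq.1 h2.symm)
    rwa [mul_assoc, mul_inv_cancel, mul_one] at h3
  have hfin : Finite (PSL ⧸ barGamma p) := by
    apply Nat.finite_of_card_ne_zero
    change (barGamma p).index ≠ 0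
    have : 0 < (p - 1) * p * (p + 1) :=
      Nat.mul_pos (Nat.mul_pos (by omega) hp.pos) (Nat.succ_pos p)
    omega
  have hcard : Nat.card (PSL ⧸ barGamma p) = (barGamma p).index := rfl
  obtain ⟨e⟩ := stabilizer_mulEquiv closure_s_u s_sq u_cube exists_lift
    (hfree s (not_mem_barGamma p hp S (by decide)))
    (hfree u (not_mem_barGamma p hp (T * S) (by decide))) ((1 : PSL) : PSL ⧸ barGamma p) M
    (by omega)
  rw [MulAction.stabilizer_quotient] at e
  have hinj : Function.Injective (toPerm.rangeRestrict.comp (red p).ker.subtype) := by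
    rw [injective_iff_map_eq_one]
    intro k hk
    have : (k : SL(2, ℤ)) ∈ (red p).ker ⊓ toPerm.rangeRestrict.ker := ⟨k.2, hk⟩
    rw [disjoint_ker p hp3] at this
    exact Subtype.ext this
  have hrange : (toPerm.rangeRestrict.comp (red p).ker.subtype).range = barGamma p := by
    rw [MonoidHom.range_comp, Subgroup.range_subtype]
  exact ⟨(MonoidHom.ofInjective hinj).trans ((MulEquiv.subgroupCongr hrange).trans e)⟩

end Modular

/-! ### Central extensions of free groups -/

/-- A central extension of a free group splits, and as the kernel `⟨z⟩` is central, it is a direct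
product. -/
theorem splits {G H ι : Type*} [Group G] [Group H] (ρ : G →* H)
    (hρ : Function.Surjective ρ) (z : G) (hz : z ∈ Subgroup.center G) (hzinf : orderOf z = 0)
    (hker : ρ.ker = Subgroup.zpowers z) (e : H ≃* FreeGroup ι) :
    Nonempty (G ≃* Multiplicative ℤ × FreeGroup ι) := by
  choose g hg using fun i => hρ (e.symm (FreeGroup.of i))
  let σ : FreeGroup ι →* G := FreeGroup.lift g
  have hσ : ∀ x, e (ρ (σ x)) = x := by
    refine DFunLike.congr_fun (?_ : (e.toMonoidHom.comp (ρ.comp σ)) = MonoidHom.id _)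
    ext i
    simp [σ, hg]
  have hρz : ∀ n : ℤ, ρ (z ^ n) = 1 := fun n => by
    rw [← MonoidHom.mem_ker, hker]
    exact ⟨n, rfl⟩
  let Φ : Multiplicative ℤ × FreeGroup ι →* G :=
    MonoidHom.noncommCoprod (zpowersHom G z) σ fun n x => by
      change Commute (z ^ n.toAdd) (σ x)
      exact Commute.zpow_left (Subgroup.mem_center_iff.1 hz (σ x)).symm _
  have hΦ : ∀ n x, Φ (n, x) = z ^ n.toAdd * σ x := fun n x => rfl
  refine ⟨(MulEquiv.ofBijective Φ ⟨?_, ?_⟩).symm⟩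
  · rw [injective_iff_map_eq_one]
    rintro ⟨n, x⟩ h
    rw [hΦ] at h
    have hx : x = 1 := by
      rw [← hσ x, ← map_one e, ← map_one ρ, ← h, map_mul, hρz, one_mul]
    subst hx
    rw [map_one, mul_one] at h
    have hn : n.toAdd = 0 := by
      have := orderOf_dvd_iff_zpow_eq_one.2 h
      rwa [hzinf, Int.natCast_zero, zero_dvd_iff] at this
    exact Prod.ext hn rfl
  · intro k
    have hk : k * (σ (e (ρ k)))⁻¹ ∈ ρ.ker := by
      rw [MonoidHom.mem_ker, map_mul, map_inv, mul_inv_eq_one]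
      apply e.injective
      rw [hσ]
    rw [hker] at hk
    obtain ⟨n, hn⟩ := hk
    refine ⟨(Multiplicative.ofAdd n, e (ρ k)), ?_⟩
    rw [hΦ]
    exact mul_inv_eq_iff_eq_mul.1 hn.symm |>.symm

end Congr

/-- Let `G` have an infinite cyclic central subgroup `⟨z⟩` with
`G/⟨z⟩ ≅ SL₂(ℤ)`, and let `K` be the kernel of the composite
`G → SL₂(ℤ) → SL₂(ℤ/p)` for a prime `p ≥ 3`. Then `K ≅ ℤ × F_M` with `F_M` free
of rank `M = 1 + (p−1)p(p+1)/12`. -/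
theorem stmt_15 {G : Type*} [Group G] (p : ℕ) (hp : p.Prime) (hp3 : 3 ≤ p)
    (z : G) (hz : z ∈ Subgroup.center G) (hzinf : orderOf z = 0)
    (ρ : G →* Matrix.SpecialLinearGroup (Fin 2) ℤ)
    (hρ : Function.Surjective ρ) (hker : ρ.ker = Subgroup.zpowers z)
    (M : ℕ) (hM : 12 * M = 12 + (p - 1) * p * (p + 1)) :
    Nonempty
      ((((Matrix.SpecialLinearGroup.map (Int.castRingHom (ZMod p))).comp ρ).ker) ≃*
        Multiplicative ℤ × FreeGroup (Fin M)) := by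
  obtain ⟨e⟩ := Congr.ker_red_mulEquiv p hp hp3 M hM
  set K := ((Matrix.SpecialLinearGroup.map (Int.castRingHom (ZMod p))).comp ρ).ker with hK
  have hzρ : ρ z = 1 := by
    rw [← MonoidHom.mem_ker, hker]
    exact Subgroup.mem_zpowers z
  have hzK : z ∈ K := by
    rw [hK, MonoidHom.mem_ker, MonoidHom.comp_apply, hzρ, map_one]
  let ρK : K →* (Congr.red p).ker := (ρ.comp K.subtype).codRestrict _ fun k => k.2
  refine Congr.splits ρK ?_ ⟨z, hzK⟩ ?_ ?_ ?_ e
  · rintro ⟨h, hh⟩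
    obtain ⟨g, rfl⟩ := hρ h
    exact ⟨⟨g, hh⟩, rfl⟩
  · rw [Subgroup.mem_center_iff]
    exact fun k => Subtype.ext (Subgroup.mem_center_iff.1 hz k)
  · rw [← hzinf, ← Subgroup.orderOf_coe]
  · ext k
    have h1 : k ∈ ρK.ker ↔ (k : G) ∈ ρ.ker := by
      rw [MonoidHom.mem_ker, MonoidHom.mem_ker, Subtype.ext_iff]
      rfl
    rw [h1, hker, Subgroup.mem_zpowers_iff, Subgroup.mem_zpowers_iff]
    exact exists_congr fun n => by rw [Subtype.ext_iff]; rfl
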